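/- arXiv:2209.05742 — 4 statements merged into one kernel-verified Lean document; each statement's English description precedes it below -/
import Mathlib

section
/- Let P be the explicit irreversible transition matrix defined from θ. Then: (1) P is irreducible; (2) all entries of P are nonnegative (so, since each row sums to 1 by construction of the last column, P is row-stochastic); (3) θ is an invariant distribution of P, i.e. ∑_{i=1}^n θ_i P_{ij} = θ_j for every j (θ is the leading left eigenvector of P). -/
/-- Off-last-column entries of the explicit irreversible transition matrix built from a
positive nondecreasing vector `θ` on states `1, …, n` (empty products are `1`):
`P_{ij} = 0` for `j < i < n`; `P_{ii} = (θ i − θ 1)/(θ i + θ n)` for `i < n`;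
`P_{nj} = (θ j (θ 1 + θ n))/(θ n (θ j + θ n)) ∏_{k=1}^{j−1} (θ n − θ k)/(θ k + θ n)` for `j < n`;
`P_{ij} = (2 θ j (θ 1 + θ n))/((θ i + θ n)(θ j + θ n)) ∏_{k=i+1}^{j−1} (θ n − θ k)/(θ k + θ n)`
for `i < j < n`. -/
noncomputable def explicitAux (n : ℕ) (θ : ℕ → ℝ) (i j : ℕ) : ℝ :=
  if i = n then
    (θ j * (θ 1 + θ n)) / (θ n * (θ j + θ n)) *
      ∏ k ∈ Finset.Icc 1 (j - 1), (θ n - θ k) / (θ k + θ n)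
  else if j < i then 0
  else if j = i then (θ i - θ 1) / (θ i + θ n)
  else (2 * θ j * (θ 1 + θ n)) / ((θ i + θ n) * (θ j + θ n)) *
      ∏ k ∈ Finset.Icc (i + 1) (j - 1), (θ n - θ k) / (θ k + θ n)

/-- The explicit irreversible transition matrix: the last column is
`P_{in} = 1 − ∑_{k=1}^{n−1} P_{ik}` and the other entries are `explicitAux`. -/
noncomputable def explicitP (n : ℕ) (θ : ℕ → ℝ) (i j : ℕ) : ℝ :=
  if j = n then 1 - ∑ k ∈ Finset.Icc 1 (n - 1), explicitAux n θ i k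
  else explicitAux n θ i j

/-- `m`-th power of a matrix indexed by the states `1, …, n`. -/
noncomputable def matPowIcc (n : ℕ) (P : ℕ → ℕ → ℝ) : ℕ → ℕ → ℕ → ℝ
  | 0, i, j => if i = j then 1 else 0
  | m + 1, i, j => ∑ k ∈ Finset.Icc 1 n, matPowIcc n P m i k * P k j

/-!
`explicitP n θ` is the matrix of a lazy cyclic sweep. A state `i` is left with probability
`w i = (θ 1 + θ n) / (θ i + θ n)`; the chain then runs through `i + 1, i + 2, …`, where `n` is
followed by `1`, and settles at the first `k` at which an independent coin with success probability
`q k = 2 θ k / (θ k + θ n)` succeeds. Since `q n = 1`, the sweep never goes beyond `n`. The weights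
`q` are invariant under the sweep, because a product of failure probabilities telescopes, and
`θ i * w i = (θ 1 + θ n) / 2 * q i` turns this into invariance of `θ`. The edges
`1 → 2 → ⋯ → n → 1` all have positive probability, so the chain is irreducible.
-/

section LazySweep

open Finset

variable {R : Type*} [CommRing R]

/-- The probability that the first success among independent trials at `s + 1, s + 2, …` occurs at
`j`, where the trial at `k` succeeds with probability `q k`. -/
def firstStop (q : ℕ → R) (s j : ℕ) : R :=
  if s < j then q j * ∏ k ∈ Ioo s j, (1 - q k) else 0

/-- The transition matrix on the states `1, …, n` of the lazy cyclic sweep: state `i` is left with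
probability `w i`, and the next state is then the first success after `i` in cyclic order. The sweep
starts after `i % n`, so that the successor `i % n + 1` of `n` is `1`. -/
def lazySweep (n : ℕ) (q w : ℕ → R) (i j : ℕ) : R :=
  (if i = j then 1 - w i else 0) + w i * firstStop q (i % n) j

variable {n s j : ℕ} {q w : ℕ → R}

lemma firstStop_of_lt (h : s < j) : firstStop q s j = q j * ∏ k ∈ Ioo s j, (1 - q k) :=
  if_pos h

lemma firstStop_of_le (h : j ≤ s) : firstStop q s j = 0 :=
  if_neg h.not_gt

lemma firstStop_succ (q : ℕ → R) (s : ℕ) : firstStop q s (s + 1) = q (s + 1) := by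
  simp [firstStop, Ioo_add_one_right_eq_Ioc]

lemma sum_Ioc_firstStop (q : ℕ → R) (s n : ℕ) :
    ∑ j ∈ Ioc s n, firstStop q s j = 1 - ∏ k ∈ Ioc s n, (1 - q k) := by
  rw [prod_one_sub_ordered, sub_sub_cancel]
  refine sum_congr rfl fun j hj => ?_
  have hfilter : {k ∈ Ioc s n | k < j} = Ioo s j := by grind
  rw [firstStop_of_lt (mem_Ioc.1 hj).1, hfilter]

lemma sum_firstStop (hs : s < n) (hq : q n = 1) : ∑ j ∈ Icc 1 n, firstStop q s j = 1 := by
  have hsub : Ioc s n ⊆ Icc 1 n := by grind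
  have hzero : ∏ k ∈ Ioc s n, (1 - q k) = 0 :=
    prod_eq_zero (right_mem_Ioc.2 hs) (by rw [hq, sub_self])
  rw [← sum_subset hsub fun j hj hjs => firstStop_of_le (by grind), sum_Ioc_firstStop, hzero,
    sub_zero]

lemma sum_mul_prod_one_sub_Ioo (q : ℕ → R) (s j : ℕ) :
    ∑ i ∈ Ioo s j, q i * ∏ k ∈ Ioo i j, (1 - q k) = 1 - ∏ k ∈ Ioo s j, (1 - q k) := by
  -- Expand `∏ k ∈ Ioo s j, ((1 - q k) + q k) = 1` according to the last `i` contributing `q i`.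
  have hexpand := prod_add_ordered (Ioo s j) (fun k => 1 - q k) q
  simp only [sub_add_cancel, prod_const_one, mul_one] at hexpand
  refine eq_sub_of_add_eq' <| Eq.trans (congrArg _ (sum_congr rfl fun i hi => ?_)) hexpand.symm
  have hfilter : {k ∈ Ioo s j | i < k} = Ioo i j := by grind
  rw [hfilter]

lemma sum_mul_firstStop (hq : q n = 1) (hj : j ∈ Icc 1 n) :
    ∑ i ∈ Icc 1 n, q i * firstStop q (i % n) j = q j := by
  obtain ⟨hj1, hjn⟩ := mem_Icc.1 hj
  have hsplit : Icc 1 n = insert n (Ioo 0 n) := by grind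
  have hstart : ∑ i ∈ Ioo 0 n, q i * firstStop q (i % n) j =
      q j * ∑ i ∈ Ioo 0 j, q i * ∏ k ∈ Ioo i j, (1 - q k) := by
    rw [mul_sum]
    refine Eq.symm <|
      sum_subset_zero_on_sdiff (Ioo_subset_Ioo_right hjn) (fun i hi => ?_) fun i hi => ?_
    · simp only [mem_sdiff, mem_Ioo] at hi
      rw [Nat.mod_eq_of_lt hi.1.2, firstStop_of_le (by omega), mul_zero]
    · rw [mem_Ioo] at hi
      rw [Nat.mod_eq_of_lt (hi.2.trans_le hjn), firstStop_of_lt hi.2]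
      ring
  rw [hsplit, sum_insert right_notMem_Ioo, hstart, sum_mul_prod_one_sub_Ioo, Nat.mod_self, hq,
    firstStop_of_lt hj1]
  ring

lemma sum_lazySweep {i : ℕ} (hq : q n = 1) (hi : i ∈ Icc 1 n) :
    ∑ j ∈ Icc 1 n, lazySweep n q w i j = 1 := by
  have hn : 0 < n := by rw [mem_Icc] at hi; omega
  simp only [lazySweep, sum_add_distrib, sum_ite_eq, if_pos hi, ← mul_sum,
    sum_firstStop (Nat.mod_lt i hn) hq]
  ring

lemma sum_mul_lazySweep {μ : ℕ → R} {c : R} (hq : q n = 1)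
    (hμ : ∀ i ∈ Icc 1 n, μ i * w i = c * q i) (hj : j ∈ Icc 1 n) :
    ∑ i ∈ Icc 1 n, μ i * lazySweep n q w i j = μ j := by
  have hmove : ∑ i ∈ Icc 1 n, μ i * (w i * firstStop q (i % n) j) = μ j * w j := by
    rw [hμ j hj, ← sum_mul_firstStop hq hj, mul_sum]
    refine sum_congr rfl fun i hi => ?_
    rw [← mul_assoc, hμ i hi, mul_assoc]
  simp only [lazySweep, mul_add, sum_add_distrib, mul_ite, mul_zero, sum_ite_eq', if_pos hj, hmove]
  ring

section Order

variable [PartialOrder R] {i : ℕ}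

lemma firstStop_nonneg [IsOrderedRing R] (hq : ∀ k ∈ Icc 1 n, q k ∈ Set.Icc 0 1)
    (hj : j ∈ Icc 1 n) : 0 ≤ firstStop q s j := by
  rw [firstStop]
  split_ifs
  · refine mul_nonneg (hq j hj).1 (prod_nonneg fun k hk => sub_nonneg.2 (hq k ?_).2)
    grind
  · exact le_rfl

lemma lazySweep_nonneg [IsOrderedRing R] (hq : ∀ k ∈ Icc 1 n, q k ∈ Set.Icc 0 1)
    (hw : w i ∈ Set.Icc 0 1) (hj : j ∈ Icc 1 n) : 0 ≤ lazySweep n q w i j := by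
  refine add_nonneg ?_ (mul_nonneg hw.1 (firstStop_nonneg hq hj))
  split_ifs
  exacts [sub_nonneg.2 hw.2, le_rfl]

lemma lazySweep_succ_pos [IsStrictOrderedRing R] (hw : w i ∈ Set.Ioc 0 1)
    (hq : 0 < q (i % n + 1)) : 0 < lazySweep n q w i (i % n + 1) := by
  rw [lazySweep, firstStop_succ]
  refine add_pos_of_nonneg_of_pos ?_ (mul_pos hw.1 hq)
  split_ifs
  exacts [sub_nonneg.2 hw.2, le_rfl]

end Order

end LazySweep

section MatPow

open Finset

variable {n m i j k : ℕ} {P : ℕ → ℕ → ℝ}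

lemma matPowIcc_nonneg (hP : ∀ i ∈ Icc 1 n, ∀ j ∈ Icc 1 n, 0 ≤ P i j) (hj : j ∈ Icc 1 n) :
    0 ≤ matPowIcc n P m i j := by
  induction m generalizing j with
  | zero => rw [matPowIcc]; split_ifs <;> norm_num
  | succ m ih => exact sum_nonneg fun k hk => mul_nonneg (ih hk) (hP k hk j hj)

lemma matPowIcc_succ_pos (hP : ∀ i ∈ Icc 1 n, ∀ j ∈ Icc 1 n, 0 ≤ P i j)
    (hk : k ∈ Icc 1 n) (hj : j ∈ Icc 1 n) (hik : 0 < matPowIcc n P m i k) (hkj : 0 < P k j) :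
    0 < matPowIcc n P (m + 1) i j :=
  sum_pos' (fun l hl => mul_nonneg (matPowIcc_nonneg hP hl) (hP l hl j hj))
    ⟨k, hk, mul_pos hik hkj⟩

lemma mod_add_one_mem_Icc (hn : 0 < n) (a : ℕ) : a % n + 1 ∈ Icc 1 n :=
  mem_Icc.2 ⟨Nat.le_add_left 1 _, Nat.mod_lt a hn⟩

lemma matPowIcc_cycle_pos (hP : ∀ i ∈ Icc 1 n, ∀ j ∈ Icc 1 n, 0 ≤ P i j)
    (hcycle : ∀ i ∈ Icc 1 n, 0 < P i (i % n + 1)) (hi : i ∈ Icc 1 n) (m : ℕ) :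
    0 < matPowIcc n P m i ((i - 1 + m) % n + 1) := by
  obtain ⟨hi1, hin⟩ := mem_Icc.1 hi
  have hn : 0 < n := by omega
  induction m with
  | zero =>
    have hreturn : (i - 1 + 0) % n + 1 = i := by rw [add_zero, Nat.mod_eq_of_lt] <;> omega
    rw [hreturn, matPowIcc, if_pos rfl]
    exact one_pos
  | succ m ih =>
    have hk := mod_add_one_mem_Icc hn (i - 1 + m)
    have hnext := hcycle _ hk
    rw [Nat.mod_add_mod, add_assoc] at hnext
    exact matPowIcc_succ_pos hP hk (mod_add_one_mem_Icc hn _) ih hnext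

lemma exists_matPowIcc_pos_of_cycle (hP : ∀ i ∈ Icc 1 n, ∀ j ∈ Icc 1 n, 0 ≤ P i j)
    (hcycle : ∀ i ∈ Icc 1 n, 0 < P i (i % n + 1)) (hi : i ∈ Icc 1 n) (hj : j ∈ Icc 1 n) :
    ∃ m, 1 ≤ m ∧ 0 < matPowIcc n P m i j := by
  have hpos := matPowIcc_cycle_pos hP hcycle hi (n + j - i)
  rw [mem_Icc] at hi hj
  have harrive : (i - 1 + (n + j - i)) % n + 1 = j := by
    rw [show i - 1 + (n + j - i) = j - 1 + n by omega, Nat.add_mod_right, Nat.mod_eq_of_lt] <;>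
      omega
  exact ⟨n + j - i, by omega, by rwa [harrive] at hpos⟩

end MatPow

section ExplicitP

open Finset

/-- The success probability `q k` at state `k` of the sweep that underlies `explicitP n θ`; the
factors `(θ n - θ k) / (θ k + θ n)` in `explicitAux` are the failure probabilities `1 - q k`. -/
noncomputable def stopProb (n : ℕ) (θ : ℕ → ℝ) (k : ℕ) : ℝ := 2 * θ k / (θ k + θ n)

/-- The probability `w i` with which the sweep that underlies `explicitP n θ` leaves state `i`. -/
noncomputable def leaveProb (n : ℕ) (θ : ℕ → ℝ) (i : ℕ) : ℝ := (θ 1 + θ n) / (θ i + θ n)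

variable {n i j : ℕ} {θ : ℕ → ℝ}

lemma one_sub_stopProb {k : ℕ} (h : θ k + θ n ≠ 0) :
    1 - stopProb n θ k = (θ n - θ k) / (θ k + θ n) := by
  rw [stopProb]
  field_simp
  ring

lemma stopProb_self (h : θ n ≠ 0) : stopProb n θ n = 1 := by
  rw [stopProb, ← two_mul, div_self (mul_ne_zero two_ne_zero h)]

lemma mul_leaveProb (n : ℕ) (θ : ℕ → ℝ) (i : ℕ) :
    θ i * leaveProb n θ i = (θ 1 + θ n) / 2 * stopProb n θ i := by
  rw [leaveProb, stopProb]
  ring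

lemma prod_Icc_eq_prod_one_sub_stopProb (hθ : ∀ k ∈ Icc 1 n, θ k + θ n ≠ 0) (s : ℕ)
    (hj : j ≤ n) :
    ∏ k ∈ Icc (s + 1) (j - 1), (θ n - θ k) / (θ k + θ n) =
      ∏ k ∈ Ioo s j, (1 - stopProb n θ k) := by
  have hIcc : Icc (s + 1) (j - 1) = Ioo s j := by grind
  rw [hIcc]
  refine prod_congr rfl fun k hk => (one_sub_stopProb (hθ k ?_)).symm
  grind

lemma explicitAux_eq_lazySweep (hθ : ∀ k ∈ Icc 1 n, θ k + θ n ≠ 0) (hi : i ∈ Icc 1 n)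
    (hj1 : 1 ≤ j) (hjn : j < n) :
    explicitAux n θ i j = lazySweep n (stopProb n θ) (leaveProb n θ) i j := by
  have hθi := hθ i hi
  rw [explicitAux, lazySweep]
  rcases (mem_Icc.1 hi).2.eq_or_lt with rfl | hin
  · rw [if_pos rfl, if_neg hjn.ne', Nat.mod_self, firstStop_of_lt hj1,
      prod_Icc_eq_prod_one_sub_stopProb hθ 0 hjn.le, leaveProb, stopProb, mul_div_mul_comm]
    ring
  rw [if_neg hin.ne, Nat.mod_eq_of_lt hin]
  rcases lt_trichotomy i j with hij | rfl | hji
  · rw [if_neg hij.not_gt, if_neg hij.ne', if_neg hij.ne, firstStop_of_lt hij,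
      prod_Icc_eq_prod_one_sub_stopProb hθ i hjn.le, leaveProb, stopProb, mul_div_mul_comm]
    ring
  · rw [if_neg (lt_irrefl i), if_pos rfl, if_pos rfl, firstStop_of_le le_rfl, leaveProb]
    field_simp
    ring
  · rw [if_pos hji, if_neg hji.ne', firstStop_of_le hji.le, mul_zero, add_zero]

lemma explicitP_of_ne (h : j ≠ n) : explicitP n θ i j = explicitAux n θ i j :=
  if_neg h

lemma sum_explicitP (hn : 1 ≤ n) (θ : ℕ → ℝ) (i : ℕ) :
    ∑ j ∈ Icc 1 n, explicitP n θ i j = 1 := by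
  have hn_notMem : n ∉ Icc 1 (n - 1) := by grind
  have haux : ∑ j ∈ Icc 1 (n - 1), explicitP n θ i j = ∑ j ∈ Icc 1 (n - 1), explicitAux n θ i j :=
    sum_congr rfl fun j hj => explicitP_of_ne (by grind)
  rw [← insert_Icc_sub_one_right_eq_Icc hn, sum_insert hn_notMem, haux, explicitP, if_pos rfl,
    sub_add_cancel]

lemma explicitP_eq_lazySweep (hθ : ∀ k ∈ Icc 1 n, θ k + θ n ≠ 0) (hi : i ∈ Icc 1 n)
    (hj : j ∈ Icc 1 n) :
    explicitP n θ i j = lazySweep n (stopProb n θ) (leaveProb n θ) i j := by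
  obtain ⟨hj1, hjn⟩ := mem_Icc.1 hj
  have hoff : ∀ k ∈ Ico 1 n,
      explicitP n θ i k = lazySweep n (stopProb n θ) (leaveProb n θ) i k := fun k hk => by
    obtain ⟨hk1, hkn⟩ := mem_Ico.1 hk
    rw [explicitP_of_ne hkn.ne, explicitAux_eq_lazySweep hθ hi hk1 hkn]
  rcases hjn.lt_or_eq with hjn | rfl
  · exact hoff j (mem_Ico.2 ⟨hj1, hjn⟩)
  -- The last columns agree because the rows of both matrices sum to `1`.
  have hrows : ∑ k ∈ Icc 1 j, explicitP j θ i k =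
      ∑ k ∈ Icc 1 j, lazySweep j (stopProb j θ) (leaveProb j θ) i k := by
    rw [sum_explicitP hj1, sum_lazySweep (stopProb_self fun h => hθ j hj (by simp [h])) hi]
  rw [← Ico_insert_right hj1, sum_insert right_notMem_Ico, sum_insert right_notMem_Ico,
    sum_congr rfl hoff] at hrows
  exact add_right_cancel hrows

lemma sum_mul_explicitP (hθ : ∀ k ∈ Icc 1 n, θ k + θ n ≠ 0) (hj : j ∈ Icc 1 n) :
    ∑ i ∈ Icc 1 n, θ i * explicitP n θ i j = θ j := by
  have hn : n ∈ Icc 1 n := by grind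
  rw [sum_congr rfl fun i hi => by rw [explicitP_eq_lazySweep hθ hi hj]]
  exact sum_mul_lazySweep (stopProb_self fun h => hθ n hn (by simp [h]))
    (fun i _ => mul_leaveProb n θ i) hj

lemma stopProb_mem_Ioc {k : ℕ} (hk : 0 < θ k) (hkn : θ k ≤ θ n) : stopProb n θ k ∈ Set.Ioc 0 1 := by
  have hsum : 0 < θ k + θ n := by linarith
  exact ⟨div_pos (by linarith) hsum, (div_le_one hsum).2 (by linarith)⟩

lemma leaveProb_mem_Ioc (h1 : 0 < θ 1 + θ n) (hi : θ 1 ≤ θ i) : leaveProb n θ i ∈ Set.Ioc 0 1 := by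
  have hsum : 0 < θ i + θ n := by linarith
  exact ⟨div_pos h1 hsum, (div_le_one hsum).2 (by linarith)⟩

lemma add_ne_zero_of_extremal (hpos : 0 < θ 1) (hmin : ∀ k ∈ Icc 1 n, θ 1 ≤ θ k)
    (hmax : ∀ k ∈ Icc 1 n, θ k ≤ θ n) : ∀ k ∈ Icc 1 n, θ k + θ n ≠ 0 := fun k hk =>
  ne_of_gt (by linarith [hmin k hk, hmax k hk])

lemma explicitP_nonneg (hpos : 0 < θ 1) (hmin : ∀ k ∈ Icc 1 n, θ 1 ≤ θ k)
    (hmax : ∀ k ∈ Icc 1 n, θ k ≤ θ n) (hi : i ∈ Icc 1 n) (hj : j ∈ Icc 1 n) :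
    0 ≤ explicitP n θ i j := by
  rw [explicitP_eq_lazySweep (add_ne_zero_of_extremal hpos hmin hmax) hi hj]
  have hq : ∀ k ∈ Icc 1 n, stopProb n θ k ∈ Set.Icc 0 1 := fun k hk =>
    Set.Ioc_subset_Icc_self (stopProb_mem_Ioc (hpos.trans_le (hmin k hk)) (hmax k hk))
  have hw : leaveProb n θ i ∈ Set.Icc 0 1 :=
    Set.Ioc_subset_Icc_self (leaveProb_mem_Ioc (by linarith [hmin i hi, hmax i hi]) (hmin i hi))
  exact lazySweep_nonneg hq hw hj

lemma explicitP_cycle_pos (hpos : 0 < θ 1) (hmin : ∀ k ∈ Icc 1 n, θ 1 ≤ θ k)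
    (hmax : ∀ k ∈ Icc 1 n, θ k ≤ θ n) (hi : i ∈ Icc 1 n) : 0 < explicitP n θ i (i % n + 1) := by
  have hsucc : i % n + 1 ∈ Icc 1 n := mod_add_one_mem_Icc (by grind) i
  rw [explicitP_eq_lazySweep (add_ne_zero_of_extremal hpos hmin hmax) hi hsucc]
  exact lazySweep_succ_pos
    (leaveProb_mem_Ioc (by linarith [hmin i hi, hmax i hi]) (hmin i hi))
    (stopProb_mem_Ioc (hpos.trans_le (hmin _ hsucc)) (hmax _ hsucc)).1

end ExplicitP

theorem explicitP_irreducible_stochastic_invariant_general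
    (n : ℕ) (θ : ℕ → ℝ) (hpos : 0 < θ 1)
    (hmin : ∀ i ∈ Finset.Icc 1 n, θ 1 ≤ θ i) (hmax : ∀ i ∈ Finset.Icc 1 n, θ i ≤ θ n) :
    (∀ i j, 1 ≤ i → i ≤ n → 1 ≤ j → j ≤ n →
      ∃ m : ℕ, 1 ≤ m ∧ 0 < matPowIcc n (explicitP n θ) m i j) ∧
    (∀ i j, 1 ≤ i → i ≤ n → 1 ≤ j → j ≤ n → 0 ≤ explicitP n θ i j) ∧
    (∀ i, 1 ≤ i → i ≤ n → ∑ j ∈ Finset.Icc 1 n, explicitP n θ i j = 1) ∧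
    (∀ j, 1 ≤ j → j ≤ n → ∑ i ∈ Finset.Icc 1 n, θ i * explicitP n θ i j = θ j) := by
  have hnonneg : ∀ i ∈ Finset.Icc 1 n, ∀ j ∈ Finset.Icc 1 n, 0 ≤ explicitP n θ i j :=
    fun i hi j hj => explicitP_nonneg hpos hmin hmax hi hj
  refine ⟨fun i j hi hin hj hjn => ?_, fun i j hi hin hj hjn => ?_, fun i hi hin => ?_,
    fun j hj hjn => ?_⟩
  · exact exists_matPowIcc_pos_of_cycle hnonneg
      (fun k hk => explicitP_cycle_pos hpos hmin hmax hk)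
      (Finset.mem_Icc.2 ⟨hi, hin⟩) (Finset.mem_Icc.2 ⟨hj, hjn⟩)
  · exact hnonneg i (Finset.mem_Icc.2 ⟨hi, hin⟩) j (Finset.mem_Icc.2 ⟨hj, hjn⟩)
  · exact sum_explicitP (hi.trans hin) θ i
  · exact sum_mul_explicitP (add_ne_zero_of_extremal hpos hmin hmax) (Finset.mem_Icc.2 ⟨hj, hjn⟩)

/-- **The explicit irreversible transition matrix is an irreducible stochastic matrix
with invariant distribution `θ`.** For a probability vector `θ` on states `1, …, n`
(`n ≥ 2`, positive, nondecreasing): (1) `explicitP n θ` is irreducible; (2) all its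
entries are nonnegative and each row sums to `1` (row-stochastic); (3) `θ` is an
invariant distribution, i.e. `∑_i θ i P_{ij} = θ j` for every `j`. -/
theorem explicitP_irreducible_stochastic_invariant
    (n : ℕ) (hn : 2 ≤ n) (θ : ℕ → ℝ)
    (hpos : ∀ i, 1 ≤ i → i ≤ n → 0 < θ i)
    (hmono : ∀ i j, 1 ≤ i → i ≤ j → j ≤ n → θ i ≤ θ j)
    (hsum : ∑ i ∈ Finset.Icc 1 n, θ i = 1) :
    (∀ i j, 1 ≤ i → i ≤ n → 1 ≤ j → j ≤ n →
      ∃ m : ℕ, 1 ≤ m ∧ 0 < matPowIcc n (explicitP n θ) m i j) ∧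
    (∀ i j, 1 ≤ i → i ≤ n → 1 ≤ j → j ≤ n → 0 ≤ explicitP n θ i j) ∧
    (∀ i, 1 ≤ i → i ≤ n → ∑ j ∈ Finset.Icc 1 n, explicitP n θ i j = 1) ∧
    (∀ j, 1 ≤ j → j ≤ n → ∑ i ∈ Finset.Icc 1 n, θ i * explicitP n θ i j = θ j) :=
  explicitP_irreducible_stochastic_invariant_general n θ (hpos 1 le_rfl (one_le_two.trans hn))
    (fun i hi => hmono 1 i le_rfl (Finset.mem_Icc.1 hi).1 (Finset.mem_Icc.1 hi).2)
    (fun i hi => hmono i n (Finset.mem_Icc.1 hi).1 (Finset.mem_Icc.1 hi).2 le_rfl)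
end

section
/- Let P be the explicit irreversible transition matrix defined from θ. Then for all indices 1 ≤ i ≤ j < n: 1 − ∑_{k=1}^{j} P_{ik} = ((θ_1 + θ_n)/(θ_i + θ_n)) · ∏_{k=i+1}^{j} (θ_n − θ_k)/(θ_n + θ_k). In particular, 1 − P_{ii} = (θ_1 + θ_n)/(θ_i + θ_n) for every i < n. -/
/-!
In row `i` the diagonal entry is `1 - c` with `c = (θ 1 + θ n) / (θ i + θ n)`. Put
`r k = (θ n - θ k) / (θ n + θ k)`. Since `1 - r k = 2 * θ k / (θ k + θ n)`, the entry in a column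
`i < k < n` is `c * (1 - r k) * r (i + 1) * ⋯ * r (k - 1)`, so the sum of these telescopes.
-/

theorem sum_Ioc_one_sub_mul_prod_Ioo {ι R : Type*} [LinearOrder ι] [LocallyFiniteOrder ι]
    [CommRing R] (r : ι → R) (a b : ι) :
    ∑ k ∈ Finset.Ioc a b, (1 - r k) * ∏ l ∈ Finset.Ioo a k, r l =
      1 - ∏ k ∈ Finset.Ioc a b, r k := by
  have filter_lt : ∀ k ∈ Finset.Ioc a b, {l ∈ Finset.Ioc a b | l < k} = Finset.Ioo a k := by
    intro k hk
    ext l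
    simp only [Finset.mem_filter, Finset.mem_Ioc, Finset.mem_Ioo] at hk ⊢
    exact ⟨fun h => ⟨h.1.1, h.2⟩, fun h => ⟨⟨h.1, h.2.le.trans hk.2⟩, h.2⟩⟩
  have expand := Finset.prod_one_sub_ordered (Finset.Ioc a b) (fun k => 1 - r k)
  simp only [sub_sub_cancel] at expand
  rw [expand, sub_sub_cancel]
  exact Finset.sum_congr rfl fun k hk => by rw [filter_lt k hk]

/-- The mass `(θ 1 + θ n) / (θ i + θ n)` that row `i < n` of `explicitP` places to the right of
the diagonal. -/
noncomputable def escapeMass (n : ℕ) (θ : ℕ → ℝ) (i : ℕ) : ℝ :=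
  (θ 1 + θ n) / (θ i + θ n)

/-- The factor by which the mass remaining in a row of `explicitP` shrinks when the sum passes
column `k`; it does not depend on the row. -/
noncomputable def survivalRatio (n : ℕ) (θ : ℕ → ℝ) (k : ℕ) : ℝ :=
  (θ n - θ k) / (θ n + θ k)

section

variable {n : ℕ} {θ : ℕ → ℝ} {i j k : ℕ}

theorem one_sub_survivalRatio (hk : θ k + θ n ≠ 0) :
    1 - survivalRatio n θ k = 2 * θ k / (θ k + θ n) := by
  rw [survivalRatio, add_comm (θ n)]
  field_simp
  ring

theorem explicitP_eq_zero_of_lt (hki : k < i) (hin : i < n) : explicitP n θ i k = 0 := by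
  rw [explicitP, if_neg (hki.trans hin).ne, explicitAux, if_neg hin.ne, if_pos hki]

theorem explicitP_self (hin : i < n) (hi : θ i + θ n ≠ 0) :
    explicitP n θ i i = 1 - escapeMass n θ i := by
  rw [explicitP, if_neg hin.ne, explicitAux, if_neg hin.ne, if_neg (lt_irrefl i), if_pos rfl,
    escapeMass]
  field_simp
  ring

theorem explicitP_of_lt (hik : i < k) (hkn : k < n) (hk : θ k + θ n ≠ 0) :
    explicitP n θ i k = escapeMass n θ i *
      ((1 - survivalRatio n θ k) * ∏ l ∈ Finset.Ioo i k, survivalRatio n θ l) := by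
  have Icc_eq_Ioo : Finset.Icc (i + 1) (k - 1) = Finset.Ioo i k := by
    ext l
    simp only [Finset.mem_Icc, Finset.mem_Ioo]
    omega
  rw [explicitP, if_neg hkn.ne, explicitAux, if_neg (hik.trans hkn).ne, if_neg hik.not_gt,
    if_neg hik.ne', Icc_eq_Ioo, one_sub_survivalRatio hk, escapeMass]
  simp only [survivalRatio, add_comm (θ n)]
  rw [← mul_assoc, div_mul_div_comm, mul_comm (2 * θ k)]

theorem sum_Icc_one_explicitP (hi : 1 ≤ i) (hij : i ≤ j) (hin : i < n) :
    ∑ k ∈ Finset.Icc 1 j, explicitP n θ i k =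
      explicitP n θ i i + ∑ k ∈ Finset.Ioc i j, explicitP n θ i k := by
  rw [Finset.add_sum_Ioc_eq_sum_Icc hij]
  refine (Finset.sum_subset (Finset.Icc_subset_Icc_left hi) fun k hk hk' => ?_).symm
  have hki : k < i := by
    simp only [Finset.mem_Icc] at hk hk'
    omega
  exact explicitP_eq_zero_of_lt hki hin

theorem sum_Ioc_explicitP (hjn : j < n) (hden : ∀ k ∈ Finset.Ioc i j, θ k + θ n ≠ 0) :
    ∑ k ∈ Finset.Ioc i j, explicitP n θ i k =
      escapeMass n θ i * (1 - ∏ k ∈ Finset.Ioc i j, survivalRatio n θ k) := by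
  rw [← sum_Ioc_one_sub_mul_prod_Ioo, Finset.mul_sum]
  refine Finset.sum_congr rfl fun k hk => ?_
  obtain ⟨hik, hkj⟩ := Finset.mem_Ioc.1 hk
  exact explicitP_of_lt hik (hkj.trans_lt hjn) (hden k hk)

theorem one_sub_sum_Icc_one_explicitP (hi : 1 ≤ i) (hij : i ≤ j) (hjn : j < n)
    (hden : ∀ k ∈ Finset.Icc i j, θ k + θ n ≠ 0) :
    1 - ∑ k ∈ Finset.Icc 1 j, explicitP n θ i k =
      escapeMass n θ i * ∏ k ∈ Finset.Ioc i j, survivalRatio n θ k := by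
  have hin : i < n := hij.trans_lt hjn
  rw [sum_Icc_one_explicitP hi hij hin,
    explicitP_self hin (hden i (Finset.left_mem_Icc.2 hij)),
    sum_Ioc_explicitP hjn fun k hk => hden k (Finset.Ioc_subset_Icc_self hk)]
  ring

end

theorem explicitP_partial_row_sums_general (n : ℕ) (θ : ℕ → ℝ)
    (hden : ∀ i, 1 ≤ i → i < n → θ i + θ n ≠ 0) :
    (∀ i j, 1 ≤ i → i ≤ j → j < n →
      1 - ∑ k ∈ Finset.Icc 1 j, explicitP n θ i k =
        ((θ 1 + θ n) / (θ i + θ n)) *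
          ∏ k ∈ Finset.Icc (i + 1) j, (θ n - θ k) / (θ n + θ k)) ∧
    (∀ i, 1 ≤ i → i < n →
      1 - explicitP n θ i i = (θ 1 + θ n) / (θ i + θ n)) := by
  refine ⟨fun i j hi hij hjn => ?_, fun i hi hin => ?_⟩
  · have hden_Icc : ∀ k ∈ Finset.Icc i j, θ k + θ n ≠ 0 := fun k hk =>
      hden k (hi.trans (Finset.mem_Icc.1 hk).1) ((Finset.mem_Icc.1 hk).2.trans_lt hjn)
    rw [Finset.Icc_add_one_left_eq_Ioc]
    exact one_sub_sum_Icc_one_explicitP hi hij hjn hden_Icc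
  · rw [explicitP_self hin (hden i hi hin), sub_sub_cancel, escapeMass]

/-- **Partial row sums of the explicit irreversible transition matrix.**
For all `1 ≤ i ≤ j < n`,
`1 − ∑_{k=1}^{j} P_{ik} = ((θ 1 + θ n)/(θ i + θ n)) ∏_{k=i+1}^{j} (θ n − θ k)/(θ n + θ k)`;
in particular `1 − P_{ii} = (θ 1 + θ n)/(θ i + θ n)` for every `i < n`. -/
theorem explicitP_partial_row_sums
    (n : ℕ) (hn : 2 ≤ n) (θ : ℕ → ℝ)
    (hpos : ∀ i, 1 ≤ i → i ≤ n → 0 < θ i)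
    (hmono : ∀ i j, 1 ≤ i → i ≤ j → j ≤ n → θ i ≤ θ j)
    (hsum : ∑ i ∈ Finset.Icc 1 n, θ i = 1) :
    (∀ i j, 1 ≤ i → i ≤ j → j < n →
      1 - ∑ k ∈ Finset.Icc 1 j, explicitP n θ i k =
        ((θ 1 + θ n) / (θ i + θ n)) *
          ∏ k ∈ Finset.Icc (i + 1) j, (θ n - θ k) / (θ n + θ k)) ∧
    (∀ i, 1 ≤ i → i < n →
      1 - explicitP n θ i i = (θ 1 + θ n) / (θ i + θ n)) := by
  exact explicitP_partial_row_sums_general n θ fun i hi hin =>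
    (add_pos (hpos i hi hin.le) (hpos n (hi.trans hin.le) le_rfl)).ne'
end

section
/- Let P be the explicit irreversible transition matrix defined from θ. Then for all indices 1 ≤ i < j < n: θ_n P_{nj} + ∑_{k=1}^{i} θ_k P_{kj} = (θ_j (θ_1 + θ_n)/(θ_j + θ_n)) · ∏_{k=i+1}^{j−1} (θ_n − θ_k)/(θ_n + θ_k). -/
/-!
Put `a k = (θ n - θ k) / (θ n + θ k)`, so that `1 - a k = 2 θ k / (θ n + θ k)`. For
`k < j < n` the weighted entry `θ k P_{kj}` is a factor depending only on `j` times
`(1 - a k) ∏_{k < l < j} a l`, the difference of two consecutive tail products of `a`, while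
`θ n P_{nj}` is the same factor times the full product. The partial column sums therefore telescope.
-/

section

open Finset

theorem prod_Ico_add_sum_one_sub_mul_prod_Ico {R : Type*} [CommRing R] (a : ℕ → R) {s i j : ℕ}
    (hsi : s ≤ i) (hij : i ≤ j) :
    ∏ k ∈ Ico s j, a k + ∑ k ∈ Ico s i, (1 - a k) * ∏ l ∈ Ico (k + 1) j, a l =
      ∏ k ∈ Ico i j, a k := by
  have term_eq_sub : ∀ k ∈ Ico s i, (1 - a k) * ∏ l ∈ Ico (k + 1) j, a l =
      ∏ l ∈ Ico (k + 1) j, a l - ∏ l ∈ Ico k j, a l := fun k hk => by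
    rw [prod_eq_prod_Ico_succ_bot ((mem_Ico.1 hk).2.trans_le hij), one_sub_mul]
  rw [sum_congr rfl term_eq_sub, sum_Ico_sub (fun k => ∏ l ∈ Ico k j, a l) hsi,
    add_sub_cancel]

variable {n : ℕ} {θ : ℕ → ℝ}

theorem mul_explicitP_last {j : ℕ} (hj : 0 < j) (hjn : j ≠ n) (hθn : θ n ≠ 0) :
    θ n * explicitP n θ n j =
      θ j * (θ 1 + θ n) / (θ j + θ n) * ∏ k ∈ Ico 1 j, (θ n - θ k) / (θ n + θ k) := by
  simp only [explicitP, explicitAux, if_neg hjn, if_true,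
    Icc_sub_one_right_eq_Ico_of_not_isMin (not_isMin_of_lt hj), add_comm (θ n)]
  field_simp

theorem mul_explicitP_of_lt {k j : ℕ} (hkj : k < j) (hjn : j < n) (hθk : θ k + θ n ≠ 0) :
    θ k * explicitP n θ k j =
      θ j * (θ 1 + θ n) / (θ j + θ n) *
        ((1 - (θ n - θ k) / (θ n + θ k)) *
          ∏ l ∈ Ico (k + 1) j, (θ n - θ l) / (θ n + θ l)) := by
  simp only [explicitP, explicitAux, if_neg hjn.ne, if_neg (hkj.trans hjn).ne, if_neg hkj.not_gt,
    if_neg hkj.ne', Icc_sub_one_right_eq_Ico_of_not_isMin (not_isMin_of_lt hkj), add_comm (θ n)]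
  have one_sub_ratio : 1 - (θ n - θ k) / (θ k + θ n) = 2 * θ k / (θ k + θ n) := by
    field_simp
    ring
  rw [one_sub_ratio]
  field_simp

theorem explicitP_partial_column_sums_general {i j : ℕ} (hij : i < j) (hjn : j < n)
    (hθn : θ n ≠ 0) (hθ : ∀ k, 1 ≤ k → k ≤ j → θ k + θ n ≠ 0) :
    θ n * explicitP n θ n j + ∑ k ∈ Icc 1 i, θ k * explicitP n θ k j =
      θ j * (θ 1 + θ n) / (θ j + θ n) *
        ∏ k ∈ Icc (i + 1) (j - 1), (θ n - θ k) / (θ n + θ k) := by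
  have hj : 0 < j := i.zero_le.trans_lt hij
  have weighted_entry : ∀ k ∈ Ico 1 (i + 1), θ k * explicitP n θ k j =
      θ j * (θ 1 + θ n) / (θ j + θ n) *
        ((1 - (θ n - θ k) / (θ n + θ k)) *
          ∏ l ∈ Ico (k + 1) j, (θ n - θ l) / (θ n + θ l)) := fun k hk => by
    obtain ⟨hk, hki⟩ := mem_Ico.1 hk
    have hkj : k < j := (Nat.lt_succ_iff.1 hki).trans_lt hij
    exact mul_explicitP_of_lt hkj hjn (hθ k hk hkj.le)
  rw [Icc_sub_one_right_eq_Ico_of_not_isMin (not_isMin_of_lt hj), ← Ico_add_one_right_eq_Icc,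
    mul_explicitP_last hj hjn.ne hθn, sum_congr rfl weighted_entry, ← mul_sum, ← mul_add,
    prod_Ico_add_sum_one_sub_mul_prod_Ico _ (Nat.le_add_left 1 i) hij]

end

/-- **Partial column sums of the explicit irreversible transition matrix.**
For all `1 ≤ i < j < n`,
`θ n P_{nj} + ∑_{k=1}^{i} θ k P_{kj}
  = (θ j (θ 1 + θ n)/(θ j + θ n)) ∏_{k=i+1}^{j−1} (θ n − θ k)/(θ n + θ k)`. -/
theorem explicitP_partial_column_sums
    (n : ℕ) (hn : 2 ≤ n) (θ : ℕ → ℝ)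
    (hpos : ∀ i, 1 ≤ i → i ≤ n → 0 < θ i)
    (hmono : ∀ i j, 1 ≤ i → i ≤ j → j ≤ n → θ i ≤ θ j)
    (hsum : ∑ i ∈ Finset.Icc 1 n, θ i = 1) :
    ∀ i j, 1 ≤ i → i < j → j < n →
      θ n * explicitP n θ n j + ∑ k ∈ Finset.Icc 1 i, θ k * explicitP n θ k j =
        (θ j * (θ 1 + θ n) / (θ j + θ n)) *
          ∏ k ∈ Finset.Icc (i + 1) (j - 1), (θ n - θ k) / (θ n + θ k) := by
  have hn_pos : 0 < θ n := hpos n (one_le_two.trans hn) le_rfl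
  exact fun i j _ hij hjn => explicitP_partial_column_sums_general hij hjn hn_pos.ne'
    fun k hk hkj => (add_pos (hpos k hk (hkj.trans hjn.le)) hn_pos).ne'
end

section
/- Let P be the explicit irreversible transition matrix defined from θ. Then for every θ-mean-zero f ∈ ℝⁿ and every g ∈ ℝⁿ with (I − P)g = f, one has ⟨g, f⟩_θ = (θ_n/(θ_1 + θ_n)) · ⟨f, f⟩_θ. -/
/-!
Every row of `P` sums to one, so only the differences `h i = g i - g n` enter the equation
`(I - P) g = f`. Row `i < n` involves `h` through a discounted sum of the later values, and back
substitution collapses that sum to a plain tail sum of `θ f`: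
`(θ 1 + θ n) h i = (θ i + θ n) f i + 2 ∑_{i < j < n} θ j f j`.
Pairing with `θ f`, the double sum completes a square, so that
`(θ 1 + θ n) ⟨g, f⟩ = θ n ∑_{i < n} θ i (f i)² + (∑_{i < n} θ i f i)²`,
and the mean-zero condition turns the square into the missing term `θ n * (θ n (f n)²)`.
-/

open Finset

section FiniteSums

variable {R : Type*} [CommRing R]

/-- The sum of the values `b j`, `i ≤ j < n`, each discounted by the factors `r k`, `i ≤ k < j`.
It solves the backward recurrence `x i = b i + r i * x (i + 1)`, `x n = 0`. -/
def discountedSum (b r : ℕ → R) (n i : ℕ) : R :=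
  ∑ j ∈ Ico i n, b j * ∏ k ∈ Ico i j, r k

theorem discountedSum_self (b r : ℕ → R) (n : ℕ) : discountedSum b r n n = 0 := by
  rw [discountedSum, Ico_self, sum_empty]

theorem discountedSum_eq_add (b r : ℕ → R) {n i : ℕ} (hi : i < n) :
    discountedSum b r n i = b i + r i * discountedSum b r n (i + 1) := by
  rw [discountedSum, discountedSum, sum_eq_sum_Ico_succ_bot hi, Ico_self, prod_empty, mul_one,
    mul_sum]
  congr 1
  refine sum_congr rfl fun j hj ↦ ?_
  rw [prod_eq_prod_Ico_succ_bot (Nat.lt_of_succ_le (mem_Ico.1 hj).1)]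
  ring

theorem discountedSum_eq_sum_Ico {b r c : ℕ → R} {n i : ℕ} (hi : i ≤ n)
    (hb : ∀ j, i ≤ j → j < n → b j = c j + (1 - r j) * discountedSum b r n (j + 1)) :
    discountedSum b r n i = ∑ j ∈ Ico i n, c j := by
  refine Nat.decreasingInduction' (P := fun m ↦ discountedSum b r n m = ∑ j ∈ Ico m n, c j)
    (fun m hmn him ih ↦ ?_) hi ?_
  · rw [discountedSum_eq_add b r hmn, hb m him hmn, sum_eq_sum_Ico_succ_bot hmn, ← ih]
    ring
  · rw [discountedSum_self, Ico_self, sum_empty]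

theorem sum_Ico_mul_add_two_mul_sum_Ico (a : ℕ → R) {m n : ℕ} (hmn : m ≤ n) :
    ∑ i ∈ Ico m n, a i * (a i + 2 * ∑ j ∈ Ico (i + 1) n, a j) = (∑ i ∈ Ico m n, a i) ^ 2 := by
  refine Nat.decreasingInduction' (P := fun m ↦
    ∑ i ∈ Ico m n, a i * (a i + 2 * ∑ j ∈ Ico (i + 1) n, a j) = (∑ i ∈ Ico m n, a i) ^ 2)
    (fun k hkn _ ih ↦ ?_) hmn ?_
  · rw [sum_eq_sum_Ico_succ_bot hkn, sum_eq_sum_Ico_succ_bot hkn, ih]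
    ring
  · simp

theorem sum_Icc_mul_of_sum_eq_zero (g : ℕ → R) {w : ℕ → R} {m n : ℕ} (hmn : m ≤ n)
    (hw : ∑ i ∈ Icc m n, w i = 0) :
    ∑ i ∈ Icc m n, g i * w i = ∑ i ∈ Ico m n, (g i - g n) * w i := by
  rw [← sum_Ico_add_eq_sum_Icc hmn] at hw ⊢
  simp only [sub_mul, sum_sub_distrib, ← mul_sum]
  linear_combination g n * hw

end FiniteSums

/-- The coupling of row `i - 1` of the explicit matrix to the values `h j` with `i ≤ j < n`: up to
the factor `2 / (θ (i - 1) + θ n)` it is the strictly upper triangular part of that row applied to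
`h`, the last column being left out. -/
noncomputable def explicitCoupling (n : ℕ) (θ h : ℕ → ℝ) (i : ℕ) : ℝ :=
  discountedSum (fun j ↦ θ j * (θ 1 + θ n) * h j / (θ j + θ n))
    (fun k ↦ (θ n - θ k) / (θ k + θ n)) n i

section ExplicitMatrix

variable {n : ℕ} {θ f g : ℕ → ℝ}

theorem sum_explicitAux_mul (θ h : ℕ → ℝ) {i : ℕ} (hi : 1 ≤ i) (hin : i < n) :
    ∑ j ∈ Ico 1 n, explicitAux n θ i j * h j =
      (θ i - θ 1) / (θ i + θ n) * h i + 2 / (θ i + θ n) * explicitCoupling n θ h (i + 1) := by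
  have lower : ∑ j ∈ Ico 1 i, explicitAux n θ i j * h j = 0 := by
    refine sum_eq_zero fun j hj ↦ ?_
    rw [explicitAux, if_neg hin.ne, if_pos (mem_Ico.1 hj).2, zero_mul]
  have diagonal : explicitAux n θ i i = (θ i - θ 1) / (θ i + θ n) := by
    rw [explicitAux, if_neg hin.ne, if_neg (lt_irrefl i), if_pos rfl]
  have upper : ∑ j ∈ Ico (i + 1) n, explicitAux n θ i j * h j =
      2 / (θ i + θ n) * explicitCoupling n θ h (i + 1) := by
    rw [explicitCoupling, discountedSum, mul_sum]
    refine sum_congr rfl fun j hj ↦ ?_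
    have hij : i < j := (mem_Ico.1 hj).1
    rw [explicitAux, if_neg hin.ne, if_neg hij.not_gt, if_neg hij.ne',
      Icc_sub_one_right_eq_Ico_of_not_isMin (not_isMin_of_lt hij), mul_div_mul_comm]
    ring
  rw [← sum_Ico_consecutive _ hi hin.le, sum_eq_sum_Ico_succ_bot hin, lower, zero_add, diagonal,
    upper]

theorem sum_explicitP_mul (θ g : ℕ → ℝ) (hn : 1 ≤ n) (i : ℕ) :
    ∑ j ∈ Icc 1 n, explicitP n θ i j * g j =
      g n + ∑ j ∈ Ico 1 n, explicitAux n θ i j * (g j - g n) := by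
  have off_last : ∑ j ∈ Ico 1 n, explicitP n θ i j * g j =
      ∑ j ∈ Ico 1 n, explicitAux n θ i j * g j :=
    sum_congr rfl fun j hj ↦ by rw [explicitP, if_neg (mem_Ico.1 hj).2.ne]
  have last : explicitP n θ i n = 1 - ∑ j ∈ Ico 1 n, explicitAux n θ i j := by
    rw [explicitP, if_pos rfl, Icc_sub_one_right_eq_Ico_of_not_isMin (not_isMin_of_lt hn)]
  simp only [← sum_Ico_add_eq_sum_Icc hn, off_last, last, mul_sub, sum_sub_distrib, ← sum_mul]
  ring

theorem mul_sub_last_eq_coupling {i : ℕ} (hi : 1 ≤ i) (hin : i < n) (hθ : θ i + θ n ≠ 0)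
    (hg : g i - ∑ j ∈ Icc 1 n, explicitP n θ i j * g j = f i) :
    (θ 1 + θ n) * (g i - g n) =
      (θ i + θ n) * f i + 2 * explicitCoupling n θ (fun j ↦ g j - g n) (i + 1) := by
  rw [← hg, sum_explicitP_mul θ g (hi.trans hin.le), sum_explicitAux_mul θ _ hi hin]
  field_simp
  ring

theorem explicitCoupling_eq_sum (hθ : ∀ i, 1 ≤ i → i < n → θ i + θ n ≠ 0)
    (hg : ∀ i, 1 ≤ i → i < n → g i - ∑ j ∈ Icc 1 n, explicitP n θ i j * g j = f i)
    {i : ℕ} (hi : 1 ≤ i) (hin : i ≤ n) :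
    explicitCoupling n θ (fun j ↦ g j - g n) i = ∑ j ∈ Ico i n, f j * θ j := by
  refine discountedSum_eq_sum_Ico hin fun j hij hjn ↦ ?_
  have hj := hi.trans hij
  have hθj := hθ j hj hjn
  rw [← explicitCoupling, mul_assoc, mul_sub_last_eq_coupling hj hjn hθj (hg j hj hjn)]
  field_simp
  ring

theorem mul_sub_last_eq (hθ : ∀ i, 1 ≤ i → i < n → θ i + θ n ≠ 0)
    (hg : ∀ i, 1 ≤ i → i < n → g i - ∑ j ∈ Icc 1 n, explicitP n θ i j * g j = f i)
    {i : ℕ} (hi : 1 ≤ i) (hin : i < n) :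
    (θ 1 + θ n) * (g i - g n) = (θ i + θ n) * f i + 2 * ∑ j ∈ Ico (i + 1) n, f j * θ j := by
  rw [mul_sub_last_eq_coupling hi hin (hθ i hi hin) (hg i hi hin),
    explicitCoupling_eq_sum hθ hg (Nat.le_add_left 1 i) hin]

theorem mul_sum_Ico_sub_last (hn : 1 ≤ n) (hθ : ∀ i, 1 ≤ i → i < n → θ i + θ n ≠ 0)
    (hg : ∀ i, 1 ≤ i → i < n → g i - ∑ j ∈ Icc 1 n, explicitP n θ i j * g j = f i) :
    (θ 1 + θ n) * ∑ i ∈ Ico 1 n, (g i - g n) * (f i * θ i) =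
      θ n * ∑ i ∈ Ico 1 n, f i * f i * θ i + (∑ i ∈ Ico 1 n, f i * θ i) ^ 2 := by
  rw [← sum_Ico_mul_add_two_mul_sum_Ico _ hn, mul_sum, mul_sum, ← sum_add_distrib]
  refine sum_congr rfl fun i hi ↦ ?_
  obtain ⟨hi, hin⟩ := mem_Ico.1 hi
  linear_combination f i * θ i * mul_sub_last_eq hθ hg hi hin

theorem explicitP_fundamental_form_eq_general (hn : 2 ≤ n)
    (hθ : ∀ i, 1 ≤ i → i < n → θ i + θ n ≠ 0)
    (hf : ∑ i ∈ Icc 1 n, f i * θ i = 0)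
    (hg : ∀ i, 1 ≤ i → i < n → g i - ∑ j ∈ Icc 1 n, explicitP n θ i j * g j = f i) :
    ∑ i ∈ Icc 1 n, g i * f i * θ i =
      θ n / (θ 1 + θ n) * ∑ i ∈ Icc 1 n, f i * f i * θ i := by
  have hn1 : 1 ≤ n := one_le_two.trans hn
  have partial_mean : ∑ i ∈ Ico 1 n, f i * θ i = -(f n * θ n) :=
    eq_neg_of_add_eq_zero_left ((sum_Ico_add_eq_sum_Icc hn1).trans hf)
  rw [div_mul_eq_mul_div, eq_div_iff (hθ 1 le_rfl hn), mul_comm]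
  calc (θ 1 + θ n) * ∑ i ∈ Icc 1 n, g i * f i * θ i
      = θ n * ∑ i ∈ Ico 1 n, f i * f i * θ i + (∑ i ∈ Ico 1 n, f i * θ i) ^ 2 := by
        simp only [mul_assoc (g _)]
        rw [sum_Icc_mul_of_sum_eq_zero g hn1 hf, mul_sum_Ico_sub_last hn1 hθ hg]
    _ = θ n * (∑ i ∈ Ico 1 n, f i * f i * θ i + f n * f n * θ n) := by
        rw [partial_mean]; ring
    _ = θ n * ∑ i ∈ Icc 1 n, f i * f i * θ i := by rw [sum_Ico_add_eq_sum_Icc hn1]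

end ExplicitMatrix

/-- **The fundamental quadratic form of the explicit matrix on mean-zero vectors.**
Let `P = explicitP n θ`. For every `θ`-mean-zero `f` and every `g` with
`(I − P) g = f` (on the states `1, …, n`), one has
`⟨g, f⟩_θ = (θ n/(θ 1 + θ n)) ⟨f, f⟩_θ`, where `⟨x, y⟩_θ = ∑_{i=1}^n x i * y i * θ i`. -/
theorem explicitP_fundamental_form_eq
    (n : ℕ) (hn : 2 ≤ n) (θ : ℕ → ℝ)
    (hpos : ∀ i, 1 ≤ i → i ≤ n → 0 < θ i)
    (hmono : ∀ i j, 1 ≤ i → i ≤ j → j ≤ n → θ i ≤ θ j)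
    (hsum : ∑ i ∈ Finset.Icc 1 n, θ i = 1) :
    ∀ f g : ℕ → ℝ,
      (∑ i ∈ Finset.Icc 1 n, f i * θ i) = 0 →
      (∀ i, 1 ≤ i → i ≤ n →
        g i - ∑ j ∈ Finset.Icc 1 n, explicitP n θ i j * g j = f i) →
      ∑ i ∈ Finset.Icc 1 n, g i * f i * θ i =
        (θ n / (θ 1 + θ n)) * ∑ i ∈ Finset.Icc 1 n, f i * f i * θ i := by
  intro f g hf hg
  exact explicitP_fundamental_form_eq_general hn
    (fun i hi hin ↦ (add_pos (hpos i hi hin.le) (hpos n (hi.trans hin.le) le_rfl)).ne') hf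
    fun i hi hin ↦ hg i hi hin.le
end
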